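/- Relation between the Prüfer/transfer ratio and the eigenfunction amplitude: let E_0 be an eigenvalue of the Dirichlet Hamiltonian H and let v = (v_1, …, v_N) be a corresponding ℓ²-normalized eigenvector. Then u_N(E_0) ≠ 0, the ratio z_{N+1}(E) = u_{N+1}(E)/u_N(E) is differentiable at E = E_0, its derivative is nonzero, and v_N² = (z'_{N+1}(E_0))^{−1}. -/

import Mathlib

/-!
The derivative of the transfer ratio is governed by the Christoffel–Darboux (Wronskian) identity
`u'_{n+1} u_n - u_{n+1} u'_n = ∑_{k=1}^{n} u_k²` (`transfer_wronskian`), which gives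
`z'_{N+1} = (∑_{k=1}^{N} u_k²) / u_N²` wherever `u_N ≠ 0`. The eigenvector, extended by zero to
the sites `0` and `N + 1`, solves the same recurrence as the transfer sequence
(`zeroExt_recurrence`), hence `v_n = v_1 u_n`. As `v ≠ 0`, this forces `v_1 ≠ 0` and
`u_{N+1}(E₀) = 0`; the identity at `n = N` then reads `u'_{N+1} u_N = ∑ u_k² > 0`, so `u_N ≠ 0`.
Finally, normalization says `v_1² ∑ u_k² = 1`, so `v_N² = v_1² u_N² = u_N² / ∑ u_k²`.
-/


/-- The Dirichlet Hamiltonian: the `N × N` symmetric tridiagonal matrix with diagonal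
entries `ε_n` and off-diagonal entries `1`. -/
def dirichletH (N : ℕ) (ε : Fin N → ℝ) : Matrix (Fin N) (Fin N) ℝ :=
  fun i j =>
    if i = j then ε i
    else if i.val + 1 = j.val ∨ j.val + 1 = i.val then 1 else 0

/-- The transfer sequence: `u_0(E) = 0`, `u_1(E) = 1`,
`u_{n+1}(E) = (E − ε_n) u_n(E) − u_{n−1}(E)`. -/
noncomputable def transfer (ε : ℕ → ℝ) (E : ℝ) : ℕ → ℝ
  | 0 => 0
  | 1 => 1
  | n + 2 => (E - ε (n + 1)) * transfer ε E (n + 1) - transfer ε E n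

/-- Christoffel–Darboux identity for the transfer sequence, bundled with the existence of the
derivatives `a = u_n'(E)` and `b = u_{n+1}'(E)` so that one induction yields both. -/
lemma transfer_wronskian (ε : ℕ → ℝ) (E : ℝ) (n : ℕ) :
    ∃ a b : ℝ, HasDerivAt (fun x => transfer ε x n) a E ∧
      HasDerivAt (fun x => transfer ε x (n + 1)) b E ∧
      b * transfer ε E n - transfer ε E (n + 1) * a
        = ∑ k ∈ Finset.range n, transfer ε E (k + 1) ^ 2 := by
  induction n with
  | zero =>
    refine ⟨0, 0, ?_, ?_, by simp⟩
    · simpa only [transfer] using hasDerivAt_const E (0 : ℝ)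
    · simpa only [transfer] using hasDerivAt_const E (1 : ℝ)
  | succ n ih =>
    obtain ⟨a, b, ha, hb, hab⟩ := ih
    refine ⟨b, 1 * transfer ε E (n + 1) + (E - ε (n + 1)) * b - a, hb, ?_, ?_⟩
    · simp only [transfer]
      exact (((hasDerivAt_id' E).sub_const _).mul hb).sub ha
    · rw [Finset.sum_range_succ, ← hab]
      simp only [transfer]
      ring

/-- The vector `v` on the sites `1, …, N` (site `n` carries the coordinate `n - 1` of `Fin N`),
extended by zero to all of `ℕ`; this encodes the Dirichlet boundary conditions. -/
def zeroExt {N : ℕ} (v : Fin N → ℝ) : ℕ → ℝ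
  | 0 => 0
  | n + 1 => if h : n < N then v ⟨n, h⟩ else 0

lemma zeroExt_succ {N : ℕ} (v : Fin N → ℝ) (i : Fin N) : zeroExt v (i.val + 1) = v i := by
  simp [zeroExt]

/-- The eigenvalue equation read row by row. Thanks to the extension by zero, the first and the
last row take the same form as the others. -/
lemma zeroExt_recurrence {N : ℕ} {ε : ℕ → ℝ} {E : ℝ} {v : Fin N → ℝ}
    (hv : (dirichletH N (fun i => ε (i.val + 1))).mulVec v = E • v) {n : ℕ} (hn : n < N) :
    zeroExt v (n + 2) = (E - ε (n + 1)) * zeroExt v (n + 1) - zeroExt v n := by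
  have h := congrFun hv ⟨n, hn⟩
  have hsum : (dirichletH N (fun i => ε (i.val + 1))).mulVec v ⟨n, hn⟩
      = ∑ j ∈ Finset.range N, ((if n = j then ε (n + 1) * zeroExt v (j + 1) else 0)
        + (if n + 1 = j then zeroExt v (j + 1) else 0)
        + (if j + 1 = n then zeroExt v (j + 1) else 0)) := by
    rw [← Fin.sum_univ_eq_sum_range (fun j => ((if n = j then ε (n + 1) * zeroExt v (j + 1) else 0)
        + (if n + 1 = j then zeroExt v (j + 1) else 0)
        + (if j + 1 = n then zeroExt v (j + 1) else 0) : ℝ))]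
    simp only [Matrix.mulVec, dotProduct]
    refine Finset.sum_congr rfl fun j _ => ?_
    simp only [dirichletH, zeroExt_succ, Fin.ext_iff]
    split_ifs <;> first | omega | simp_all
  have hright : ∑ j ∈ Finset.range N, (if n + 1 = j then zeroExt v (j + 1) else 0)
      = zeroExt v (n + 2) := by
    rw [Finset.sum_ite_eq]
    by_cases h : n + 1 < N <;> simp [zeroExt, h]
  have hleft : ∑ j ∈ Finset.range N, (if j + 1 = n then zeroExt v (j + 1) else 0)
      = zeroExt v n := by
    cases n with
    | zero => simp [zeroExt]
    | succ m =>
      simp only [Nat.add_right_cancel_iff]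
      rw [Finset.sum_ite_eq', if_pos (Finset.mem_range.2 (by omega))]
  rw [hsum, Finset.sum_add_distrib, Finset.sum_add_distrib, hright, hleft, Finset.sum_ite_eq,
    if_pos (Finset.mem_range.2 hn), Pi.smul_apply, smul_eq_mul, ← zeroExt_succ v ⟨n, hn⟩] at h
  linarith

/-- A solution of the three-term recurrence vanishing at site `0` is determined by its value at
site `1`, so it is a multiple of the transfer sequence. -/
lemma zeroExt_eq_transfer {N : ℕ} {ε : ℕ → ℝ} {E : ℝ} {v : Fin N → ℝ}
    (hv : (dirichletH N (fun i => ε (i.val + 1))).mulVec v = E • v) :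
    ∀ n, n ≤ N + 1 → zeroExt v n = zeroExt v 1 * transfer ε E n
  | 0, _ => by simp [zeroExt, transfer]
  | 1, _ => by simp [transfer]
  | n + 2, hn => by
    rw [zeroExt_recurrence hv (by omega), zeroExt_eq_transfer hv (n + 1) (by omega),
      zeroExt_eq_transfer hv n (by omega), transfer]
    ring

/-- **Relation between the transfer ratio and the eigenfunction amplitude**: if `E₀`
is an eigenvalue of the Dirichlet Hamiltonian with ℓ²-normalized eigenvector `v`,
then `u_N(E₀) ≠ 0`, the ratio `z_{N+1}(E) = u_{N+1}(E)/u_N(E)` is differentiable at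
`E₀` with nonzero derivative, and `v_N² = (z'_{N+1}(E₀))⁻¹`. -/
theorem transfer_ratio_derivative_amplitude
    (N : ℕ) (hN : 1 ≤ N) (ε : ℕ → ℝ) (E₀ : ℝ) (v : Fin N → ℝ)
    (hv : (dirichletH N (fun i => ε (i.val + 1))).mulVec v = E₀ • v)
    (hnorm : (∑ i, v i ^ 2) = 1) :
    transfer ε E₀ N ≠ 0 ∧
    DifferentiableAt ℝ (fun E : ℝ => transfer ε E (N + 1) / transfer ε E N) E₀ ∧
    deriv (fun E : ℝ => transfer ε E (N + 1) / transfer ε E N) E₀ ≠ 0 ∧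
    v ⟨N - 1, by omega⟩ ^ 2
      = (deriv (fun E : ℝ => transfer ε E (N + 1) / transfer ε E N) E₀)⁻¹ := by
  obtain ⟨a, b, ha, hb, hab⟩ := transfer_wronskian ε E₀ N
  set S := ∑ k ∈ Finset.range N, transfer ε E₀ (k + 1) ^ 2 with hS
  set c := zeroExt v 1 with hc
  have hcS : c ^ 2 * S = 1 := by
    rw [← hnorm, hS, Finset.mul_sum,
      ← Fin.sum_univ_eq_sum_range (fun k => c ^ 2 * transfer ε E₀ (k + 1) ^ 2)]
    refine Finset.sum_congr rfl fun i _ => ?_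
    rw [← zeroExt_succ v i, zeroExt_eq_transfer hv (i.val + 1) (by omega)]
    ring
  have hc0 : c ≠ 0 := by
    rintro h
    simp [h] at hcS
  have hS0 : S ≠ 0 := by
    rintro h
    simp [h] at hcS
  have hlast : transfer ε E₀ (N + 1) = 0 := by
    have h := zeroExt_eq_transfer hv (N + 1) le_rfl
    have h0 : zeroExt v (N + 1) = 0 := by simp [zeroExt]
    rw [h0] at h
    exact (mul_eq_zero.1 h.symm).resolve_left hc0
  -- Since `u_{N+1} = 0`, a zero of `u_N` would make the whole Wronskian `S` vanish.
  have hN0 : transfer ε E₀ N ≠ 0 := by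
    intro h
    rw [h, hlast] at hab
    exact hS0 (by linarith)
  have hd := hb.fun_div ha hN0
  rw [hab] at hd
  have hvN : v ⟨N - 1, by omega⟩ = c * transfer ε E₀ N := by
    rw [← zeroExt_succ v, ← zeroExt_eq_transfer hv N (by omega)]
    congr 1
    exact Nat.sub_add_cancel hN
  refine ⟨hN0, hd.differentiableAt, ?_, ?_⟩
  · rw [hd.deriv]
    exact div_ne_zero hS0 (pow_ne_zero 2 hN0)
  · rw [hd.deriv, hvN, inv_div, eq_div_iff hS0]
    linear_combination transfer ε E₀ N ^ 2 * hcS
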